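/- Let R be a Gorenstein local ring, M a finitely generated torsion-free R-module, and M_1 its pushforward. For n ≥ 0, M satisfies Serre's condition (S_{n+1}) if and only if M_1 satisfies (S_n). -/

import Mathlib

open RingTheory.Sequence CategoryTheory

universe u

noncomputable section

/-- Depth of a module: supremum of lengths of weakly regular sequences consisting of nonunits.
For a f.g. module over a noetherian local ring this is the usual depth, and the zero module
has depth `⊤`. -/
def rdepth (A : Type u) [CommRing A] (M : Type u) [AddCommGroup M] [Module A M] : ℕ∞ :=
  sSup {n : ℕ∞ | ∃ rs : List A, (rs.length : ℕ∞) = n ∧ (∀ r ∈ rs, r ∈ nonunits A) ∧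
    RingTheory.Sequence.IsWeaklyRegular M rs}

/-- Serre's condition `(S_n)`. -/
def SerreCond (R : Type u) [CommRing R] (M : Type u) [AddCommGroup M] [Module R M] (n : ℕ) :
    Prop :=
  ∀ (p : Ideal R) (hp : p.IsPrime), Nontrivial (LocalizedModule p.primeCompl M) →
    min (n : ℕ∞) (Order.height (⟨p, hp⟩ : PrimeSpectrum R)) ≤
      rdepth (Localization.AtPrime p) (LocalizedModule p.primeCompl M)

/-- `Tor_i^R(M, N)` as an object of `ModuleCat R`. -/
def TorModCat (R : Type u) [CommRing R] (i : ℕ) (M N : Type u) [AddCommGroup M] [Module R M]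
    [AddCommGroup N] [Module R N] : ModuleCat.{u} R :=
  ((Tor (ModuleCat.{u} R) i).obj (ModuleCat.of R M)).obj (ModuleCat.of R N)

/-- `Tor_i^R(M, N)` as a type (with its `R`-module structure given by instances below). -/
def TorM (R : Type u) [CommRing R] (i : ℕ) (M N : Type u) [AddCommGroup M] [Module R M]
    [AddCommGroup N] [Module R N] : Type u :=
  TorModCat R i M N

instance (R : Type u) [CommRing R] (i : ℕ) (M N : Type u) [AddCommGroup M] [Module R M]
    [AddCommGroup N] [Module R N] : AddCommGroup (TorM R i M N) :=
  inferInstanceAs (AddCommGroup (TorModCat R i M N))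

instance (R : Type u) [CommRing R] (i : ℕ) (M N : Type u) [AddCommGroup M] [Module R M]
    [AddCommGroup N] [Module R N] : Module R (TorM R i M N) :=
  inferInstanceAs (Module R (TorModCat R i M N))

/-- A regular local ring: noetherian local, whose maximal ideal is generated by a
(weakly) regular sequence. -/
def IsRegLocal (Q : Type u) [CommRing Q] : Prop :=
  IsNoetherianRing Q ∧ IsLocalRing Q ∧
    ∃ rs : List Q, RingTheory.Sequence.IsWeaklyRegular Q rs ∧ (∀ r ∈ rs, r ∈ nonunits Q) ∧
      Ideal.span {x | x ∈ rs} = Ideal.span (nonunits Q)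

/-- A (local) complete intersection: noetherian local ring whose completion is a regular
local ring modulo a regular sequence (of nonunits). -/
def IsCIRing (R : Type u) [CommRing R] : Prop :=
  IsNoetherianRing R ∧ IsLocalRing R ∧
    ∃ (Q : Type u) (_ : CommRing Q), IsRegLocal Q ∧
      ∃ rs : List Q, (∀ r ∈ rs, r ∈ nonunits Q) ∧ RingTheory.Sequence.IsWeaklyRegular Q rs ∧
        Nonempty ((Q ⧸ Ideal.span {x | x ∈ rs}) ≃+* AdicCompletion (Ideal.span (nonunits R)) R)

/-- A hypersurface: noetherian local ring whose completion is a regular local ring modulo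
a single non-zerodivisor in the maximal ideal. -/
def IsHypersurfaceRing (R : Type u) [CommRing R] : Prop :=
  IsNoetherianRing R ∧ IsLocalRing R ∧
    ∃ (Q : Type u) (_ : CommRing Q), IsRegLocal Q ∧
      ∃ f : Q, f ∈ nonunits Q ∧ f ∈ nonZeroDivisors Q ∧
        Nonempty ((Q ⧸ Ideal.span {f}) ≃+* AdicCompletion (Ideal.span (nonunits R)) R)

/-- Maximal Cohen-Macaulay module over a local ring: depth equals the Krull dimension. -/
def IsMCM (R : Type u) [CommRing R] (M : Type u) [AddCommGroup M] [Module R M] : Prop :=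
  (rdepth R M : WithBot ℕ∞) = ringKrullDim R

/-- Cohen-Macaulay local ring. -/
def IsCMLocalRing (A : Type u) [CommRing A] : Prop :=
  IsNoetherianRing A ∧ IsLocalRing A ∧ (rdepth A A : WithBot ℕ∞) = ringKrullDim A

/-- `M` has (constant) rank: free of the same rank at every minimal prime. -/
def HasRank (R : Type u) [CommRing R] (M : Type u) [AddCommGroup M] [Module R M] : Prop :=
  ∃ r : ℕ, ∀ (p : Ideal R) (hp : p.IsPrime), p ∈ minimalPrimes R →
    Nonempty ((LocalizedModule (@Ideal.primeCompl R _ p hp) M)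
      ≃ₗ[Localization (@Ideal.primeCompl R _ p hp)]
      (Fin r → Localization (@Ideal.primeCompl R _ p hp)))

/-- Projective dimension at most `n`. -/
def pdLE (R : Type u) [CommRing R] : ℕ → ∀ (M : Type u) [AddCommGroup M] [Module R M], Prop
  | 0, M, _, _ => Module.Projective R M
  | n+1, M, _, _ => ∃ (P : Type u) (_ : AddCommGroup P) (_ : Module R P),
      Module.Projective R P ∧ ∃ f : P →ₗ[R] M, Function.Surjective f ∧
        pdLE R n (LinearMap.ker f)

/-- Injective dimension at most `n`. -/
def idLE (R : Type u) [CommRing R] : ℕ → ∀ (M : Type u) [AddCommGroup M] [Module R M], Prop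
  | 0, M, _, _ => Module.Injective R M
  | n+1, M, _, _ => ∃ (I : Type u) (_ : AddCommGroup I) (_ : Module R I),
      Module.Injective R I ∧ ∃ f : M →ₗ[R] I, Function.Injective f ∧
        idLE R n (I ⧸ LinearMap.range f)

/-- Gorenstein local ring: noetherian local with finite self-injective dimension. -/
def IsGorensteinLocalRing (R : Type u) [CommRing R] : Prop :=
  IsNoetherianRing R ∧ IsLocalRing R ∧ ∃ n : ℕ, idLE R n R

/-- The map `M → R^ν` obtained from a free cover `ε : R^ν ↠ M^*` by dualizing and composing
with the biduality map; its cokernel is the pushforward `M₁`. -/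
def pushMap (R M : Type u) [CommRing R] [AddCommGroup M] [Module R M] {ν : ℕ}
    (ε : (Fin ν → R) →ₗ[R] Module.Dual R M) : M →ₗ[R] (Fin ν → R) where
  toFun m := fun i => ε (Pi.single i 1) m
  map_add' x y := by funext i; simp
  map_smul' r x := by funext i; simp

/-- Length of a module, as the Krull dimension of its lattice of submodules. -/
def mlen (R : Type u) [CommRing R] (M : Type u) [AddCommGroup M] [Module R M] :
    WithBot ℕ∞ :=
  Order.krullDim (Submodule R M)

/-- An unramified regular local ring: equicharacteristic (contains a field), or of mixed
characteristic `(0, p)` with `p` not in the square of the maximal ideal. -/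
def IsUnramifiedRegLocal (Q : Type u) [CommRing Q] : Prop :=
  IsRegLocal Q ∧
    ((∃ (K : Type u) (_ : Field K), Nonempty (K →+* Q)) ∨
     (CharZero Q ∧ ∃ p : ℕ, p.Prime ∧ (p : Q) ∈ nonunits Q ∧
        (p : Q) ∉ (Ideal.span (nonunits Q)) ^ 2))

/-!
Localize the exact sequence `0 → M → R^ν → M₁ → 0` at a prime `p`. If `p` has height greater than
`n`, the two depth conditions are compared by counting depths along the sequence. If `p` has height
at most `n`, they say that `M_p` and `(M₁)_p` have depth at least `dim R_p`, which over the
Gorenstein ring `R_p` amounts to the vanishing of `Ext^i(-, R_p)` for all `i > 0`. Shifting along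
the sequence gives this vanishing for `(M₁)_p` in degrees `i ≥ 2`; in degree `1` it holds because
every functional on `M` is a combination of the coordinates of `M → R^ν` and hence extends to `R^ν`.

The map `M → R^ν` is injective as soon as functionals separate the points of `M`. An associated
prime of a torsion-free module has height zero, and there `R_p` is self-injective, so functionals
on `M_p` separate points; clearing denominators brings them back to `M`.
-/

open Abelian IsLocalRing Pointwise

section ExtVanishing

variable {A : Type u} [CommRing A]
  {N : Type u} [AddCommGroup N] [Module A N]
  {N₁ : Type u} [AddCommGroup N₁] [Module A N₁]
  {N₂ : Type u} [AddCommGroup N₂] [Module A N₂]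
  {N₃ : Type u} [AddCommGroup N₃] [Module A N₃]
  {T : Type u} [AddCommGroup T] [Module A T]

/-- The sequence `0 → N₁ → N₂ → N₃ → 0` with maps `f` and `g` is exact. -/
structure IsShortExact (f : N₁ →ₗ[A] N₂) (g : N₂ →ₗ[A] N₃) : Prop where
  injective : Function.Injective f
  exact : Function.Exact f g
  surjective : Function.Surjective g

variable (A N T) in
/-- The vanishing of `Ext^i_A(N, T)`, computed in the category of `A`-modules. -/
abbrev ExtVanishes (i : ℕ) : Prop :=
  Subsingleton (Ext (ModuleCat.of A N) (ModuleCat.of A T) i)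

theorem extVanishes_zero_iff : ExtVanishes A N T 0 ↔ Subsingleton (N →ₗ[A] T) :=
  (Ext.addEquiv₀.trans ModuleCat.homAddEquiv).toEquiv.subsingleton_congr

namespace IsShortExact

theorem of_injective {f : N₁ →ₗ[A] N₂} (hf : Function.Injective f) :
    IsShortExact f (LinearMap.range f).mkQ :=
  ⟨hf, LinearMap.exact_map_mkQ_range f, Submodule.mkQ_surjective _⟩

theorem of_surjective {g : N₂ →ₗ[A] N₃} (hg : Function.Surjective g) :
    IsShortExact (LinearMap.ker g).subtype g :=
  ⟨Submodule.injective_subtype _, LinearMap.exact_subtype_ker_map g, hg⟩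

theorem of_isSMulRegular {x : A} (hx : IsSMulRegular N x) :
    IsShortExact (LinearMap.lsmul A N x) (x • (⊤ : Submodule A N)).mkQ :=
  ⟨hx, LinearMap.exact_lsmul_mkQ_smul_top N x, Submodule.mkQ_surjective _⟩

variable {f : N₁ →ₗ[A] N₂} {g : N₂ →ₗ[A] N₃}

theorem localizedModule (h : IsShortExact f g) (S : Submonoid A) :
    IsShortExact (LocalizedModule.map S f) (LocalizedModule.map S g) :=
  ⟨LocalizedModule.map_injective _ _ h.injective, LocalizedModule.map_exact S _ _ h.exact,
    LocalizedModule.map_surjective _ _ h.surjective⟩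

theorem shortExact (h : IsShortExact f g) :
    (ModuleCat.shortComplexOfCompEqZero f g h.exact.linearMap_comp_eq_zero).ShortExact :=
  ModuleCat.shortComplex_shortExact _ h.exact h.injective h.surjective

theorem extVanishes_right₁ (h : IsShortExact f g) {i : ℕ}
    (h₃ : ∀ j, j + 1 = i → ExtVanishes A N N₃ j) (h₂ : ExtVanishes A N N₂ i) :
    ExtVanishes A N N₁ i := by
  rcases i with _ | i
  · rw [extVanishes_zero_iff] at h₂ ⊢
    have hinj : Function.Injective fun φ : N →ₗ[A] N₁ => f ∘ₗ φ :=
      fun _ _ => (LinearMap.cancel_left h.injective).1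
    exact hinj.subsingleton
  · refine subsingleton_of_forall_eq 0 fun x => ?_
    obtain ⟨y, rfl⟩ := Ext.covariant_sequence_exact₁ _ h.shortExact x (h₂.elim _ _) rfl
    rw [(h₃ i rfl).elim y 0, Ext.zero_comp]

theorem extVanishes_right₃ (h : IsShortExact f g) {i : ℕ} (h₂ : ExtVanishes A N N₂ i)
    (h₁ : ExtVanishes A N N₁ (i + 1)) : ExtVanishes A N N₃ i := by
  refine subsingleton_of_forall_eq 0 fun x => ?_
  obtain ⟨y, rfl⟩ := Ext.covariant_sequence_exact₃ _ h.shortExact x rfl (h₁.elim _ _)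
  rw [h₂.elim y 0, Ext.zero_comp]

theorem extVanishes_left₁ (h : IsShortExact f g) {i : ℕ} (h₂ : ExtVanishes A N₂ T i)
    (h₃ : ExtVanishes A N₃ T (i + 1)) : ExtVanishes A N₁ T i := by
  refine subsingleton_of_forall_eq 0 fun x => ?_
  obtain ⟨y, rfl⟩ := Ext.contravariant_sequence_exact₁ h.shortExact _ x (add_comm 1 i)
    (h₃.elim _ _)
  rw [h₂.elim y 0, Ext.comp_zero]

theorem extVanishes_left₂ (h : IsShortExact f g) {i : ℕ} (h₁ : ExtVanishes A N₁ T i)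
    (h₃ : ExtVanishes A N₃ T i) : ExtVanishes A N₂ T i := by
  refine subsingleton_of_forall_eq 0 fun x => ?_
  obtain ⟨y, rfl⟩ := Ext.contravariant_sequence_exact₂ h.shortExact _ x (h₁.elim _ _)
  rw [h₃.elim y 0, Ext.comp_zero]

theorem extVanishes_left₃ (h : IsShortExact f g) {i : ℕ}
    (h₁ : ∀ j, j + 1 = i → ExtVanishes A N₁ T j) (h₂ : ExtVanishes A N₂ T i) :
    ExtVanishes A N₃ T i := by
  rcases i with _ | i
  · rw [extVanishes_zero_iff] at h₂ ⊢
    have hinj : Function.Injective fun φ : N₃ →ₗ[A] T => φ ∘ₗ g :=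
      fun _ _ => (LinearMap.cancel_right h.surjective).1
    exact hinj.subsingleton
  · refine subsingleton_of_forall_eq 0 fun x => ?_
    obtain ⟨y, rfl⟩ := Ext.contravariant_sequence_exact₃ h.shortExact _ x (h₂.elim _ _)
      (add_comm 1 i)
    rw [(h₁ i rfl).elim y 0, Ext.comp_zero]

theorem exists_comp_eq (h : IsShortExact f g) (h₃ : ExtVanishes A N₃ T 1) (φ : N₁ →ₗ[A] T) :
    ∃ ψ : N₂ →ₗ[A] T, ψ ∘ₗ f = φ := by
  obtain ⟨y, hy⟩ := Ext.contravariant_sequence_exact₁ h.shortExact (ModuleCat.of A T)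
    (Ext.mk₀ (ModuleCat.ofHom φ)) (add_comm 1 0) (h₃.elim _ _)
  obtain ⟨ψ, rfl⟩ := (Ext.mk₀_bijective _ _).2 y
  rw [Ext.mk₀_comp_mk₀] at hy
  exact ⟨ψ.hom, congrArg ModuleCat.Hom.hom ((Ext.mk₀_bijective _ _).1 hy)⟩

theorem extVanishes_one (h : IsShortExact f g) (h₂ : ExtVanishes A N₂ T 1)
    (hext : ∀ φ : N₁ →ₗ[A] T, ∃ ψ : N₂ →ₗ[A] T, ψ ∘ₗ f = φ) : ExtVanishes A N₃ T 1 := by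
  refine subsingleton_of_forall_eq 0 fun x => ?_
  obtain ⟨y, rfl⟩ := Ext.contravariant_sequence_exact₃ h.shortExact _ x (h₂.elim _ _)
    (add_comm 1 0)
  obtain ⟨φ, rfl⟩ := (Ext.mk₀_bijective _ _).2 y
  obtain ⟨ψ, hψ⟩ := hext φ.hom
  have hφ : φ = (ModuleCat.shortComplexOfCompEqZero f g h.exact.linearMap_comp_eq_zero).f ≫
      ModuleCat.ofHom ψ := ModuleCat.hom_ext hψ.symm
  rw [hφ, ← Ext.mk₀_comp_mk₀, ShortComplex.ShortExact.extClass_comp_assoc]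

end IsShortExact

theorem extVanishes_succ_of_projective [Module.Projective A N] (i : ℕ) :
    ExtVanishes A N T (i + 1) := by
  have : Projective (ModuleCat.of A N) := (IsProjective.iff_projective N).mp inferInstance
  exact subsingleton_of_forall_eq 0 Ext.eq_zero_of_projective

theorem extVanishes_of_subsingleton_left [Subsingleton N] : ∀ i, ExtVanishes A N T i
  | 0 => extVanishes_zero_iff.2 inferInstance
  | i + 1 => extVanishes_succ_of_projective i

theorem extVanishes_of_subsingleton_right [Subsingleton T] (i : ℕ) : ExtVanishes A N T i :=
  have := (ModuleCat.isZero_of_subsingleton (ModuleCat.of A T)).hasInjectiveDimensionLT_zero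
  HasInjectiveDimensionLT.subsingleton (ModuleCat.of A T) 0 i i.zero_le _

theorem ExtVanishes.congr_left {i : ℕ} (h : ExtVanishes A N₁ T i) (e : N₁ ≃ₗ[A] N₂) :
    ExtVanishes A N₂ T i :=
  (IsShortExact.of_injective e.injective).extVanishes_left₂ h <|
    have : Subsingleton (N₂ ⧸ LinearMap.range e.toLinearMap) :=
      Submodule.Quotient.subsingleton_iff.2 e.range
    extVanishes_of_subsingleton_left i

theorem ExtVanishes.of_quotSMulTop [IsLocalRing A] [IsNoetherianRing A] [Module.Finite A N]
    [Module.Finite A T] {x : A} (hx : IsSMulRegular N x) (hxm : x ∈ maximalIdeal A) {i : ℕ}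
    (h : ExtVanishes A (QuotSMulTop x N) T (i + 1)) : ExtVanishes A N T i := by
  have hdiv (y : Ext (ModuleCat.of A N) (ModuleCat.of A T) i) : ∃ z, x • z = y := by
    obtain ⟨z, hz⟩ := Ext.contravariant_sequence_exact₁
      (hx.smulShortComplex_shortExact (M := ModuleCat.of A N)) (ModuleCat.of A T) y
      (add_comm 1 i) (h.elim _ _)
    change Ext (ModuleCat.of A N) (ModuleCat.of A T) i at z
    change (Ext.mk₀ (x • 𝟙 (ModuleCat.of A N))).comp z (zero_add i) = y at hz
    exact ⟨z, by rwa [Ext.mk₀_smul, Ext.smul_comp, Ext.mk₀_id_comp] at hz⟩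
  rw [ExtVanishes, ← Submodule.subsingleton_iff A, ← subsingleton_iff_bot_eq_top, eq_comm]
  refine Submodule.eq_bot_of_le_smul_of_le_jacobson_bot (maximalIdeal A) _ Module.Finite.fg_top
    (fun y _ => ?_) (maximalIdeal_le_jacobson _)
  obtain ⟨z, rfl⟩ := hdiv y
  exact Submodule.smul_mem_smul hxm Submodule.mem_top

end ExtVanishing

section Depth

variable {A : Type u} [CommRing A] {N : Type u} [AddCommGroup N] [Module A N]

theorem le_rdepth_iff_exists {j : ℕ} : (j : ℕ∞) ≤ rdepth A N ↔
    ∃ rs : List A, rs.length = j ∧ (∀ r ∈ rs, r ∈ nonunits A) ∧ IsWeaklyRegular N rs := by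
  refine ⟨fun h => ?_, fun ⟨rs, hlen, hrs, hreg⟩ => le_sSup ⟨rs, by rw [hlen], hrs, hreg⟩⟩
  rcases j with _ | k
  · exact ⟨[], rfl, by simp, IsWeaklyRegular.nil _ _⟩
  · obtain ⟨_, ⟨rs, rfl, hrs, hreg⟩, hlt⟩ :=
      lt_sSup_iff.1 ((Nat.cast_lt.2 k.lt_succ_self).trans_le h)
    have hk : k + 1 ≤ rs.length := Nat.cast_lt.1 hlt
    rw [← List.take_append_drop (k + 1) rs, isWeaklyRegular_append_iff] at hreg
    exact ⟨rs.take (k + 1), List.length_take_of_le hk,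
      fun r hr => hrs r (List.mem_of_mem_take hr), hreg.1⟩

theorem succ_le_rdepth_iff {j : ℕ} : ((j + 1 : ℕ) : ℕ∞) ≤ rdepth A N ↔
    ∃ x ∈ nonunits A, IsSMulRegular N x ∧ (j : ℕ∞) ≤ rdepth A (QuotSMulTop x N) := by
  simp only [le_rdepth_iff_exists]
  constructor
  · rintro ⟨_ | ⟨x, rs⟩, hlen, hrs, hreg⟩
    · cases hlen
    · rw [isWeaklyRegular_cons_iff] at hreg
      exact ⟨x, hrs x List.mem_cons_self, hreg.1, rs, Nat.succ.inj hlen,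
        fun r hr => hrs r (List.mem_cons_of_mem x hr), hreg.2⟩
  · rintro ⟨x, hx, hxN, rs, rfl, hrs, hreg⟩
    exact ⟨x :: rs, rfl, List.forall_mem_cons.2 ⟨hx, hrs⟩, (isWeaklyRegular_cons_iff _ _ _).2
      ⟨hxN, hreg⟩⟩

theorem one_le_rdepth_iff : 1 ≤ rdepth A N ↔ ∃ x ∈ nonunits A, IsSMulRegular N x := by
  simpa using succ_le_rdepth_iff (A := A) (N := N) (j := 0)

theorem rdepth_self_le_of_flat [Module.Flat A N] : rdepth A A ≤ rdepth A N := by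
  refine ENat.forall_natCast_le_iff_le.1 fun j hj => ?_
  obtain ⟨rs, hlen, hrs, hreg⟩ := le_rdepth_iff_exists.1 hj
  exact le_rdepth_iff_exists.2 ⟨rs, hlen, hrs,
    ((TensorProduct.rid A N).isWeaklyRegular_congr rs).1 hreg.isWeaklyRegular_lTensor⟩

theorem rdepth_eq_top_of_subsingleton [Nontrivial A] [Subsingleton N] : rdepth A N = ⊤ := by
  refine top_le_iff.1 (ENat.forall_natCast_le_iff_le.1 fun j _ => le_rdepth_iff_exists.2 ?_)
  refine ⟨List.replicate j 0, List.length_replicate, fun r hr => ?_, ⟨fun i hi => ?_⟩⟩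
  · rw [List.eq_of_mem_replicate hr]
    exact zero_mem_nonunits.2 zero_ne_one
  · exact Function.injective_of_subsingleton (α := N ⧸ _) _

variable [IsLocalRing A]

theorem maximalIdeal_smul_top_lt_top [Module.Finite A N] [Nontrivial N] :
    maximalIdeal A • (⊤ : Submodule A N) < ⊤ :=
  lt_top_iff_ne_top.2 (Submodule.top_ne_ideal_smul_of_le_jacobson_annihilator
    (maximalIdeal_le_jacobson _)).symm

variable [IsNoetherianRing A] [Module.Finite A N]

theorem le_rdepth_iff_extVanishes {j : ℕ} : (j : ℕ∞) ≤ rdepth A N ↔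
    ∀ i < j, ExtVanishes A (A ⧸ maximalIdeal A) N i := by
  rcases subsingleton_or_nontrivial N with hN | hN
  · exact iff_of_true (le_top.trans_eq rdepth_eq_top_of_subsingleton.symm)
      fun i _ => extVanishes_of_subsingleton_right i
  have hsupp : Module.support A (A ⧸ maximalIdeal A) =
      PrimeSpectrum.zeroLocus (maximalIdeal A : Set A) := by
    rw [Module.support_eq_zeroLocus, Ideal.annihilator_quotient]
  have hlt : maximalIdeal A • (⊤ : Submodule A N) < ⊤ := maximalIdeal_smul_top_lt_top
  rw [le_rdepth_iff_exists]
  constructor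
  · rintro ⟨rs, rfl, hrs, hreg⟩ i hi
    have hne : ⊤ ≠ Ideal.ofList rs • (⊤ : Submodule A N) :=
      ((Submodule.smul_mono_left (Ideal.span_le.2 fun r hr => hrs r hr)).trans_lt hlt).ne'
    exact ModuleCat.subsingleton_ext_of_exists_isRegular (maximalIdeal A)
      (ModuleCat.of A (A ⧸ maximalIdeal A)) hsupp.le (ModuleCat.of A N) hlt rs hrs ⟨hreg, hne⟩ i hi
  · intro h
    obtain ⟨rs, hlen, hrs, hreg⟩ := ModuleCat.exists_isRegular_of_exists_subsingleton_ext
      (maximalIdeal A) j (ModuleCat.of A N) hlt (ModuleCat.of A (A ⧸ maximalIdeal A)) hsupp h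
    exact ⟨rs, hlen, hrs, hreg.1⟩

namespace IsShortExact

variable {N₁ : Type u} [AddCommGroup N₁] [Module A N₁] [Module.Finite A N₁]
  {N₂ : Type u} [AddCommGroup N₂] [Module A N₂] [Module.Finite A N₂]
  {N₃ : Type u} [AddCommGroup N₃] [Module A N₃] [Module.Finite A N₃]
  {f : N₁ →ₗ[A] N₂} {g : N₂ →ₗ[A] N₃} {c : ℕ∞}

theorem le_rdepth_left (h : IsShortExact f g) (h₂ : c ≤ rdepth A N₂)
    (h₃ : c ≤ rdepth A N₃ + 1) : c ≤ rdepth A N₁ := by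
  refine ENat.forall_natCast_le_iff_le.1 fun k hk => le_rdepth_iff_extVanishes.2 fun i hi => ?_
  refine h.extVanishes_right₁ ?_ (le_rdepth_iff_extVanishes.1 (hk.trans h₂) i hi)
  rintro j rfl
  have hj : ((j + 1 : ℕ) : ℕ∞) + 1 ≤ rdepth A N₃ + 1 :=
    le_trans (by exact_mod_cast hi) (hk.trans h₃)
  exact le_rdepth_iff_extVanishes.1 ((ENat.add_le_add_iff_right ENat.one_ne_top).1 hj) j
    j.lt_succ_self

theorem le_rdepth_right (h : IsShortExact f g) (h₂ : c ≤ rdepth A N₂)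
    (h₁ : c + 1 ≤ rdepth A N₁) : c ≤ rdepth A N₃ := by
  refine ENat.forall_natCast_le_iff_le.1 fun k hk => le_rdepth_iff_extVanishes.2 fun i hi => ?_
  have hk₁ : ((k + 1 : ℕ) : ℕ∞) ≤ rdepth A N₁ := by
    push_cast
    exact (add_le_add_left hk 1).trans h₁
  exact h.extVanishes_right₃ (le_rdepth_iff_extVanishes.1 (hk.trans h₂) i hi)
    (le_rdepth_iff_extVanishes.1 hk₁ (i + 1) (Nat.succ_lt_succ hi))

end IsShortExact

end Depth

section InjectiveDimension

variable {A : Type u} [CommRing A] {N : Type u} [AddCommGroup N] [Module A N]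

theorem extVanishes_of_injectiveDimension_lt {T : Type u} [AddCommGroup T] [Module A T] {i : ℕ}
    (h : injectiveDimension (ModuleCat.of A T) < i) : ExtVanishes A N T i :=
  have := injectiveDimension_lt_iff.1 h
  HasInjectiveDimensionLT.subsingleton (ModuleCat.of A T) i i le_rfl _

theorem injective_of_forall_extVanishes_one {T : Type u} [AddCommGroup T] [Module A T]
    (h : ∀ I : Ideal A, ExtVanishes A (A ⧸ I) T 1) : Module.Injective A T := by
  refine Module.Baer.injective fun I φ => ?_
  have hI : IsShortExact I.subtype (Submodule.mkQ I) :=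
    ⟨I.subtype_injective, LinearMap.exact_subtype_mkQ I, I.mkQ_surjective⟩
  obtain ⟨ψ, rfl⟩ := hI.exists_comp_eq (h I) φ
  exact ⟨ψ, fun _ _ => rfl⟩

theorem hasInjectiveDimensionLT_of_forall_extVanishes {T : Type u} [AddCommGroup T] [Module A T]
    {n : ℕ} (h : ∀ I : Ideal A, ExtVanishes A (A ⧸ I) T n) :
    HasInjectiveDimensionLT (ModuleCat.of A T) n := by
  induction n generalizing T with
  | zero =>
    have := extVanishes_zero_iff.1 ((h ⊥).congr_left (Submodule.quotEquivOfEqBot ⊥ rfl))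
    have : Subsingleton T := (LinearMap.ringLmapEquivSelf A ℕ T).symm.injective.subsingleton
    exact (ModuleCat.isZero_of_subsingleton (ModuleCat.of A T)).hasInjectiveDimensionLT_zero
  | succ n ih =>
    rcases n with _ | n
    · have := (Module.injective_iff_injective_object A T).1 (injective_of_forall_extVanishes_one h)
      infer_instance
    · let E := Injective.under (ModuleCat.of A T)
      have : Injective (ModuleCat.of A E) := Injective.injective_under _
      have hE : IsShortExact (Injective.ι (ModuleCat.of A T)).hom _ :=
        .of_injective ((ModuleCat.mono_iff_injective _).1 inferInstance)
      refine (hE.shortExact.hasInjectiveDimensionLT_X₃_iff n this).1 (ih fun I => ?_)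
      exact hE.extVanishes_right₃ (subsingleton_of_forall_eq 0 Ext.eq_zero_of_injective) (h I)

variable [IsLocalRing A] [IsNoetherianRing A]
  {T : Type u} [AddCommGroup T] [Module A T] [Module.Finite A T] {d : ℕ}

theorem extVanishes_quotient_of_ne_maximalIdeal (hd : injectiveDimension (ModuleCat.of A T) ≤ d)
    {p : Ideal A} [hp : p.IsPrime] (hne : p ≠ maximalIdeal A) : ExtVanishes A (A ⧸ p) T d := by
  obtain ⟨x, hx, hxp⟩ : ∃ x ∈ maximalIdeal A, x ∉ p :=
    SetLike.not_le_iff_exists.1 fun hle => hne (le_antisymm (le_maximalIdeal hp.ne_top) hle)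
  have hreg : IsSMulRegular (A ⧸ p) x := by
    refine .of_right_eq_zero_of_smul fun y hy => ?_
    rw [Algebra.smul_def, mul_eq_zero] at hy
    exact hy.resolve_left fun h => hxp (Ideal.Quotient.eq_zero_iff_mem.1 h)
  exact .of_quotSMulTop hreg hx
    (extVanishes_of_injectiveDimension_lt (hd.trans_lt (by exact_mod_cast d.lt_succ_self)))

theorem extVanishes_of_extVanishes_residueField (hd : injectiveDimension (ModuleCat.of A T) ≤ d)
    (hk : ExtVanishes A (A ⧸ maximalIdeal A) T d) [hN : Module.Finite A N] :
    ExtVanishes A N T d := by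
  refine IsNoetherianRing.induction_on_isQuotientEquivQuotientPrime A hN
    (motive := fun N _ _ _ => ExtVanishes A N T d) ?_ ?_ ?_
  · exact fun N _ _ _ _ => extVanishes_of_subsingleton_left d
  · intro N _ _ _ p e
    refine ExtVanishes.congr_left ?_ e.symm
    by_cases hp : p.1 = maximalIdeal A
    · rwa [hp]
    · exact extVanishes_quotient_of_ne_maximalIdeal hd hp
  · exact fun N₁ _ _ _ N₂ _ _ _ N₃ _ _ _ f g hf hg hfg h₁ h₃ =>
      IsShortExact.extVanishes_left₂ ⟨hf, hfg, hg⟩ h₁ h₃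

theorem not_extVanishes_residueField (hd : injectiveDimension (ModuleCat.of A T) = d) :
    ¬ ExtVanishes A (A ⧸ maximalIdeal A) T d := fun hk =>
  (injectiveDimension_lt_iff.2 (hasInjectiveDimensionLT_of_forall_extVanishes fun _ =>
    extVanishes_of_extVanishes_residueField hd.le hk)).ne hd

theorem extVanishes_of_injectiveDimension_lt_add [Module.Finite A N] {i j : ℕ}
    (hd : injectiveDimension (ModuleCat.of A T) < (i + j : ℕ)) (hj : (j : ℕ∞) ≤ rdepth A N) :
    ExtVanishes A N T i := by
  induction j generalizing i N with
  | zero => exact extVanishes_of_injectiveDimension_lt hd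
  | succ j ih =>
    obtain ⟨x, hx, hreg, hjx⟩ := succ_le_rdepth_iff.1 hj
    exact .of_quotSMulTop hreg hx (ih (by rwa [add_right_comm, add_assoc]) hjx)

theorem extVanishes_residueField_zero_of_extVanishes [Module.Finite A N]
    (hd : injectiveDimension (ModuleCat.of A T) = d) (h : ExtVanishes A N T d) :
    ExtVanishes A (A ⧸ maximalIdeal A) N 0 := by
  rw [extVanishes_zero_iff]
  refine subsingleton_of_forall_eq 0 fun f => ?_
  have : IsSimpleModule A (A ⧸ maximalIdeal A) :=
    isSimpleModule_iff_isCoatom.2 (maximalIdeal.isMaximal A).out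
  refine (LinearMap.injective_or_eq_zero f).resolve_left fun hf =>
    not_extVanishes_residueField hd ?_
  refine (IsShortExact.of_injective hf).extVanishes_left₁ h
    (extVanishes_of_injectiveDimension_lt (hd.trans_lt ?_))
  exact_mod_cast d.lt_succ_self

-- `Ext^d(-, T)` turns injections into surjections and does not kill the residue field, so
-- `Ext^d(N, T) = 0` keeps the residue field out of `N` and gives a regular element on `N`; passing
-- to the quotient by it shifts the range of vanishing by one degree.
theorem le_rdepth_of_forall_extVanishes [Module.Finite A N]
    (hd : injectiveDimension (ModuleCat.of A T) = d) {s j : ℕ} (hs : s + j ≤ d)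
    (h : ∀ i > s, ExtVanishes A N T i) : (j : ℕ∞) ≤ rdepth A N := by
  induction j generalizing s N with
  | zero => exact zero_le
  | succ j ih =>
    obtain ⟨x, hx, hreg⟩ := one_le_rdepth_iff.1 <| le_rdepth_iff_extVanishes.2 fun i hi => by
      obtain rfl : i = 0 := by omega
      exact extVanishes_residueField_zero_of_extVanishes hd (h d (by omega))
    refine succ_le_rdepth_iff.2 ⟨x, hx, hreg, ih (s := s + 1) (by omega) fun i hi => ?_⟩
    refine (IsShortExact.of_isSMulRegular hreg).extVanishes_left₃ ?_ (h i (by omega))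
    exact fun k hk => h k (by omega)

end InjectiveDimension

section Dimension

variable {A : Type u} [CommRing A] [IsLocalRing A] [IsNoetherianRing A] {d : ℕ}

theorem natCast_le_rdepth_self (hd : injectiveDimension (ModuleCat.of A A) = d) :
    (d : ℕ∞) ≤ rdepth A A := by
  refine le_rdepth_of_forall_extVanishes hd (s := 0) (by omega) fun i hi => ?_
  obtain ⟨i, rfl⟩ := Nat.exists_eq_succ_of_ne_zero hi.ne'
  exact extVanishes_succ_of_projective i

-- For `p` non-maximal, `Ext^d(A/p, A) = 0`. The kernel of `A/p → k` is killed by a regular sequence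
-- of length `d`, so its `Ext^(d-1)` into `A` vanishes as well, which would force `Ext^d(k, A) = 0`.
theorem eq_maximalIdeal_of_ofList_le {rs : List A} (hreg : IsRegular A rs)
    (hd : injectiveDimension (ModuleCat.of A A) = rs.length) {p : Ideal A} [hp : p.IsPrime]
    (hle : Ideal.ofList rs ≤ p) : p = maximalIdeal A := by
  by_contra hne
  refine not_extVanishes_residueField hd ?_
  have hpm : p ≤ maximalIdeal A := le_maximalIdeal hp.ne_top
  have hfactor := IsShortExact.of_surjective (Submodule.factor_surjective hpm)
  refine hfactor.extVanishes_left₃ (fun j hj => ?_)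
    (extVanishes_quotient_of_ne_maximalIdeal hd.le hne)
  refine ModuleCat.subsingleton_ext_of_exists_isRegular (Ideal.ofList rs)
    (ModuleCat.of A (LinearMap.ker (Submodule.factor hpm))) ?_ (ModuleCat.of A A)
    hreg.top_ne_smul.symm.lt_top rs (fun r hr => Ideal.subset_span hr) hreg j (by omega)
  refine (Module.support_subset_of_injective _ (Submodule.injective_subtype _)).trans ?_
  rw [Module.support_eq_zeroLocus, Ideal.annihilator_quotient]
  exact PrimeSpectrum.zeroLocus_anti_mono hle

theorem ringKrullDim_eq_of_injectiveDimension_eq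
    (hd : injectiveDimension (ModuleCat.of A A) = d) : ringKrullDim A = d := by
  obtain ⟨rs, rfl, hrs, hw⟩ := le_rdepth_iff_exists.1 (natCast_le_rdepth_self hd)
  have hle : Ideal.ofList rs ≤ maximalIdeal A := Ideal.span_le.2 fun r hr => hrs r hr
  have hreg : IsRegular A rs :=
    ⟨hw, ((Submodule.smul_mono_left hle).trans_lt maximalIdeal_smul_top_lt_top).ne'⟩
  rw [← ringKrullDim_add_length_eq_ringKrullDim_of_isRegular rs hreg, ringKrullDim_quotient]
  have hunique (p : PrimeSpectrum.zeroLocus (Ideal.ofList rs : Set A)) :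
      p.1.asIdeal = maximalIdeal A := eq_maximalIdeal_of_ofList_le hreg hd p.2
  have : Subsingleton (PrimeSpectrum.zeroLocus (Ideal.ofList rs : Set A)) :=
    ⟨fun p q => Subtype.ext (PrimeSpectrum.ext ((hunique p).trans (hunique q).symm))⟩
  have : Nonempty (PrimeSpectrum.zeroLocus (Ideal.ofList rs : Set A)) :=
    ⟨⟨closedPoint A, hle⟩⟩
  rw [Order.krullDim_eq_zero, zero_add]

end Dimension

section Gorenstein

variable {R : Type u} [CommRing R]

theorem idLE_iff_hasInjectiveDimensionLE {n : ℕ} {M : Type u} [AddCommGroup M] [Module R M] :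
    idLE R n M ↔ HasInjectiveDimensionLE (ModuleCat.of R M) n := by
  induction n generalizing M with
  | zero =>
    rw [idLE, Module.injective_iff_injective_object, injective_iff_hasInjectiveDimensionLT_one]
  | succ n ih =>
    have hshift {I : Type u} [AddCommGroup I] [Module R I] (hI : Injective (ModuleCat.of R I))
        {f : M →ₗ[R] I} (hf : Function.Injective f) : idLE R n (I ⧸ LinearMap.range f) ↔
          HasInjectiveDimensionLE (ModuleCat.of R M) (n + 1) :=
      ih.trans ((IsShortExact.of_injective hf).shortExact.hasInjectiveDimensionLT_X₃_iff n hI)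
    constructor
    · rintro ⟨I, _, _, hI, f, hf, h⟩
      exact (hshift ((Module.injective_iff_injective_object R I).1 hI) hf).1 h
    · intro h
      let I := Injective.under (ModuleCat.of R M)
      have hI : Injective (ModuleCat.of R I) := Injective.injective_under _
      have hf : Function.Injective (Injective.ι (ModuleCat.of R M)).hom :=
        (ModuleCat.mono_iff_injective _).1 inferInstance
      exact ⟨I, inferInstance, inferInstance, (Module.injective_iff_injective_object R I).2 hI,
        _, hf, (hshift hI hf).2 h⟩

namespace IsGorensteinLocalRing

theorem exists_injectiveDimension_eq (hG : IsGorensteinLocalRing R) :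
    ∃ d : ℕ, injectiveDimension (ModuleCat.of R R) = d := by
  obtain ⟨_, _, n, hn⟩ := hG
  have hle := (injectiveDimension_le_iff _ n).2 (idLE_iff_hasInjectiveDimensionLE.1 hn)
  have hbot : injectiveDimension (ModuleCat.of R R) ≠ ⊥ := fun h =>
    not_subsingleton R (ModuleCat.isZero_of_iff_subsingleton.1
      ((injectiveDimension_eq_bot_iff _).1 h))
  obtain ⟨d, hd⟩ := WithBot.ne_bot_iff_exists.1 hbot
  rw [← hd] at hle ⊢
  obtain ⟨k, rfl, -⟩ := ENat.le_natCast_iff.1 (WithBot.coe_le_coe.1 hle)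
  exact ⟨k, rfl⟩

theorem localization (hG : IsGorensteinLocalRing R) (p : Ideal R) [p.IsPrime] :
    IsGorensteinLocalRing (Localization.AtPrime p) := by
  obtain ⟨_, _, n, hn⟩ := hG
  refine ⟨inferInstance, inferInstance, n, idLE_iff_hasInjectiveDimensionLE.2 ?_⟩
  have := idLE_iff_hasInjectiveDimensionLE.1 hn
  have hloc := ModuleCat.localizedModule_hasInjectiveDimensionLE n p.primeCompl (ModuleCat.of R R)
  have : IsLocalizedModule p.primeCompl
      ((ModuleCat.of R R).localizedModuleMkLinearMap p.primeCompl) :=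
    ModuleCat.localizedModule_isLocalizedModule (ModuleCat.of R R) p.primeCompl
  let e : (ModuleCat.of R R).localizedModule p.primeCompl ≃ₗ[Localization.AtPrime p]
      ModuleCat.of (Localization.AtPrime p) (Localization.AtPrime p) :=
    LinearEquiv.extendScalarsOfIsLocalization p.primeCompl (Localization.AtPrime p)
      (IsLocalizedModule.linearEquiv p.primeCompl
        ((ModuleCat.of R R).localizedModuleMkLinearMap p.primeCompl)
        (Algebra.linearMap R (Localization.AtPrime p)))
  exact (ModuleCat.hasInjectiveDimensionLE_iff_of_linearEquiv e n).1 hloc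

theorem ringKrullDim_le_rdepth_self (hG : IsGorensteinLocalRing R) :
    ringKrullDim R ≤ rdepth R R := by
  have := hG.1
  have := hG.2.1
  obtain ⟨d, hd⟩ := hG.exists_injectiveDimension_eq
  rw [ringKrullDim_eq_of_injectiveDimension_eq hd]
  exact WithBot.coe_le_coe.2 (natCast_le_rdepth_self hd)

theorem ringKrullDim_le_rdepth_iff (hG : IsGorensteinLocalRing R) {N : Type u} [AddCommGroup N]
    [Module R N] [Module.Finite R N] :
    ringKrullDim R ≤ rdepth R N ↔ ∀ i > 0, ExtVanishes R N R i := by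
  have := hG.1
  have := hG.2.1
  obtain ⟨d, hd⟩ := hG.exists_injectiveDimension_eq
  have hcoe : (d : WithBot ℕ∞) ≤ rdepth R N ↔ (d : ℕ∞) ≤ rdepth R N := WithBot.coe_le_coe
  rw [ringKrullDim_eq_of_injectiveDimension_eq hd, hcoe]
  refine ⟨fun h i hi => extVanishes_of_injectiveDimension_lt_add ?_ h,
    le_rdepth_of_forall_extVanishes hd d.zero_add.le⟩
  exact hd.trans_lt (by exact_mod_cast Nat.lt_add_of_pos_left hi)

end IsGorensteinLocalRing

end Gorenstein

section SerreCondition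

variable {R : Type u} [CommRing R] {M : Type u} [AddCommGroup M] [Module R M] {m n : ℕ}

variable (R n) in
/-- The condition `(G_n)`: the localizations of `R` at primes of height at most `n` are
Gorenstein. Some authors ask this only for primes of height less than `n`. -/
def GorensteinCond : Prop :=
  ∀ (p : Ideal R) [p.IsPrime], p.height ≤ n → IsGorensteinLocalRing (Localization.AtPrime p)

theorem GorensteinCond.mono (h : GorensteinCond R n) (hmn : m ≤ n) : GorensteinCond R m :=
  fun p _ hp => h p (hp.trans (Nat.cast_le.2 hmn))

theorem serreCond_iff : SerreCond R M n ↔ ∀ (p : Ideal R) [p.IsPrime],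
    min (n : ℕ∞) p.height ≤ rdepth (Localization.AtPrime p) (LocalizedModule p.primeCompl M) := by
  refine forall₂_congr fun p hp => ?_
  rw [← PrimeSpectrum.height_eq_orderHeight]
  refine ⟨fun h => ?_, fun h _ => h⟩
  rcases subsingleton_or_nontrivial (LocalizedModule p.primeCompl M) with _ | hM
  · exact le_top.trans_eq rdepth_eq_top_of_subsingleton.symm
  · exact h hM

theorem SerreCond.mono (h : SerreCond R M n) (hmn : m ≤ n) : SerreCond R M m :=
  fun p hp hM => (min_le_min_right _ (Nat.cast_le.2 hmn)).trans (h p hp hM)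

theorem IsGorensteinLocalRing.gorensteinCond (hG : IsGorensteinLocalRing R) :
    GorensteinCond R n :=
  fun p _ _ => hG.localization p

theorem IsGorensteinLocalRing.serreCond_self (hG : IsGorensteinLocalRing R) :
    SerreCond R R n := by
  refine serreCond_iff.2 fun p _ => (min_le_right _ _).trans ?_
  have hle := (hG.localization p).ringKrullDim_le_rdepth_self
  rw [IsLocalization.AtPrime.ringKrullDim_eq_height p] at hle
  exact WithBot.coe_le_coe.1 hle

end SerreCondition

section AssociatedPrimes

variable {R : Type u} [CommRing R] {M : Type u} [AddCommGroup M] [Module R M] {p : Ideal R}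

theorem rdepth_eq_zero_of_maximalIdeal_mem_associatedPrimes [IsLocalRing R]
    [IsNoetherianRing R] (h : maximalIdeal R ∈ associatedPrimes R M) : rdepth R M = 0 := by
  obtain ⟨hp, y, hy⟩ := isAssociatedPrime_iff.1 h
  rw [← Order.lt_one_iff, ← not_le, one_le_rdepth_iff]
  rintro ⟨x, hx, hreg⟩
  have hxy : x • y = 0 := by
    rwa [← mem_maximalIdeal, hy, Submodule.mem_colon_singleton] at hx
  rw [hreg.right_eq_zero_of_smul hxy] at hy
  exact hp.ne_top (hy.trans (by simp))

theorem SerreCond.height_eq_zero_of_mem_associatedPrimes [IsNoetherianRing R]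
    (hS : SerreCond R M 1) (hp : p ∈ associatedPrimes R M) : p.height = 0 := by
  have := hp.1
  have hdepth := serreCond_iff.1 hS p
  rw [rdepth_eq_zero_of_maximalIdeal_mem_associatedPrimes
    (Module.associatedPrimes.mem_associatedPrimes_atPrime_of_mem_associatedPrimes hp)] at hdepth
  simpa using hdepth

theorem exists_mem_associatedPrimes_self_le [IsNoetherianRing R]
    (htf : Submodule.torsion R M = ⊥) (hp : p ∈ associatedPrimes R M) :
    ∃ q ∈ associatedPrimes R R, p ≤ q := by
  obtain ⟨_, y, hy⟩ := isAssociatedPrime_iff.1 hp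
  have hzd : (p : Set R) ⊆ ⋃ q ∈ associatedPrimes R R, (q : Set R) := by
    rw [biUnion_associatedPrimes_eq_compl_nonZeroDivisors]
    intro x hx hx0
    have hxy : x • y = 0 := by rwa [SetLike.mem_coe, hy, Submodule.mem_colon_singleton] at hx
    have hytors : y ∈ Submodule.torsion R M := ⟨⟨x, hx0⟩, hxy⟩
    rw [(Submodule.eq_bot_iff _).1 htf y hytors] at hy
    exact hp.1.ne_top (hy.trans (by simp))
  exact (Ideal.subset_union_prime_finite (associatedPrimes.finite R R) (f := fun q => q) ⊥ ⊥
    fun q hq _ _ => hq.isPrime).1 hzd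

end AssociatedPrimes

section Functionals

theorem exists_linearMap_apply_ne_zero {A : Type u} [CommRing A] [IsLocalRing A]
    [IsNoetherianRing A] {N : Type u} [AddCommGroup N] [Module A N] {T : Type u} [AddCommGroup T]
    [Module A T] [Module.Finite A T] (hT : injectiveDimension (ModuleCat.of A T) = 0) {x : N}
    (hx : x ≠ 0) : ∃ F : N →ₗ[A] T, F x ≠ 0 := by
  have hle : Ideal.torsionOf A N x ≤ maximalIdeal A :=
    le_maximalIdeal fun h => hx ((Ideal.torsionOf_eq_top_iff A x).1 h)
  have hnontrivial : Nontrivial ((A ⧸ maximalIdeal A) →ₗ[A] T) :=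
    not_subsingleton_iff_nontrivial.1 fun h =>
      not_extVanishes_residueField (d := 0) hT (extVanishes_zero_iff.2 h)
  obtain ⟨ι, hι⟩ := exists_ne (0 : (A ⧸ maximalIdeal A) →ₗ[A] T)
  let e := Ideal.quotTorsionOfEquivSpanSingleton A N x
  obtain ⟨F, hF⟩ := (IsShortExact.of_injective (A ∙ x).injective_subtype).exists_comp_eq
    (extVanishes_of_injectiveDimension_lt (by rw [hT]; exact zero_lt_one))
    (ι ∘ₗ Submodule.factor hle ∘ₗ e.symm.toLinearMap)
  have hFx : F x = ι (Submodule.Quotient.mk 1) := by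
    have he : e.symm ⟨x, Submodule.mem_span_singleton_self x⟩ = Submodule.Quotient.mk 1 := by
      rw [LinearEquiv.symm_apply_eq, Ideal.quotTorsionOfEquivSpanSingleton_apply_mk, one_smul]
    have := LinearMap.congr_fun hF ⟨x, Submodule.mem_span_singleton_self x⟩
    rwa [LinearMap.comp_apply, LinearMap.comp_apply, LinearMap.comp_apply, LinearEquiv.coe_coe,
      he] at this
  exact ⟨F, fun h => hι (Submodule.linearMap_qext _ (LinearMap.ext_ring (hFx.symm.trans h)))⟩

variable {R : Type u} [CommRing R] [IsNoetherianRing R]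
  {M : Type u} [AddCommGroup M] [Module R M] [Module.Finite R M]

theorem exists_linearMap_localization_eq_smul (S : Submonoid R)
    (F : LocalizedModule S M →ₗ[Localization S] Localization S) :
    ∃ (h : M →ₗ[R] R) (s : S), ∀ m, algebraMap R (Localization S) (h m) =
      (s : R) • F (LocalizedModule.mkLinearMap S M m) := by
  have : Module.FinitePresentation R M := Module.finitePresentation_of_finite R M
  obtain ⟨h, s, hs⟩ := Module.FinitePresentation.exists_lift_of_isLocalizedModule S
    (Algebra.linearMap R (Localization S))
    (F.restrictScalars R ∘ₗ LocalizedModule.mkLinearMap S M)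
  exact ⟨h, s, LinearMap.congr_fun hs⟩

theorem exists_dual_apply_ne_zero (hS : SerreCond R R 1) (hG : GorensteinCond R 0)
    (htf : Submodule.torsion R M = ⊥) {m : M} (hm : m ≠ 0) :
    ∃ h : Module.Dual R M, h m ≠ 0 := by
  obtain ⟨p, hp, hmp⟩ := exists_le_isAssociatedPrime_of_isNoetherianRing R m hm
  have := hp.isPrime
  obtain ⟨q, hq, hpq⟩ := exists_mem_associatedPrimes_self_le htf hp
  have hht : p.height = 0 := le_antisymm
    ((Ideal.height_mono hpq).trans_eq (hS.height_eq_zero_of_mem_associatedPrimes hq)) zero_le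
  have hm' : LocalizedModule.mkLinearMap p.primeCompl M m ≠ 0 := fun h => by
    obtain ⟨t, ht⟩ := (IsLocalizedModule.eq_zero_iff p.primeCompl
      (LocalizedModule.mkLinearMap p.primeCompl M)).1 h
    exact t.2 (hmp (Submodule.mem_colon_singleton.2 ht))
  have hinj : injectiveDimension
      (ModuleCat.of (Localization.AtPrime p) (Localization.AtPrime p)) = 0 := by
    obtain ⟨d, hd⟩ := (hG p hht.le).exists_injectiveDimension_eq
    rw [hd, ← ringKrullDim_eq_of_injectiveDimension_eq hd,
      IsLocalization.AtPrime.ringKrullDim_eq_height p, hht, WithBot.coe_zero]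
  obtain ⟨F, hF⟩ := exists_linearMap_apply_ne_zero hinj hm'
  obtain ⟨h, s, hs⟩ := exists_linearMap_localization_eq_smul p.primeCompl F
  refine ⟨h, fun hhm => hF ?_⟩
  have hsF : s • F (LocalizedModule.mkLinearMap p.primeCompl M m) = 0 := by
    rw [Submonoid.smul_def, ← hs, hhm, map_zero]
  exact IsLocalizedModule.smul_injective (Algebra.linearMap R (Localization.AtPrime p)) s
    (hsF.trans (smul_zero s).symm)

end Functionals

section Pushforward

variable {R M : Type u} [CommRing R] [AddCommGroup M] [Module R M] {ν : ℕ}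
  {ε : (Fin ν → R) →ₗ[R] Module.Dual R M}

theorem sum_smul_proj_comp_pushMap (v : Fin ν → R) :
    (∑ i, v i • LinearMap.proj i) ∘ₗ pushMap R M ε = ε v := by
  ext m
  conv_rhs => rw [pi_eq_sum_univ' v]
  simp [pushMap]

theorem pushMap_injective [IsNoetherianRing R] [Module.Finite R M] (hS : SerreCond R R 1)
    (hG : GorensteinCond R 0) (htf : Submodule.torsion R M = ⊥) (hε : Function.Surjective ε) :
    Function.Injective (pushMap R M ε) := by
  refine (injective_iff_map_eq_zero _).2 fun m hm => by_contra fun hne => ?_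
  obtain ⟨h, hhm⟩ := exists_dual_apply_ne_zero hS hG htf hne
  obtain ⟨v, rfl⟩ := hε h
  rw [← sum_smul_proj_comp_pushMap, LinearMap.comp_apply, hm, map_zero] at hhm
  exact hhm rfl

theorem exists_comp_map_pushMap_eq [IsNoetherianRing R] [Module.Finite R M]
    (hε : Function.Surjective ε) (S : Submonoid R)
    (φ : LocalizedModule S M →ₗ[Localization S] Localization S) :
    ∃ ψ : LocalizedModule S (Fin ν → R) →ₗ[Localization S] Localization S,
      ψ ∘ₗ LocalizedModule.map S (pushMap R M ε) = φ := by
  obtain ⟨h, s, hs⟩ := exists_linearMap_localization_eq_smul S φ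
  obtain ⟨v, rfl⟩ := hε h
  let L : (Fin ν → R) →ₗ[R] R := ∑ i, v i • LinearMap.proj i
  let L' : LocalizedModule S (Fin ν → R) →ₗ[Localization S] Localization S :=
    IsLocalizedModule.mapExtendScalars S (LocalizedModule.mkLinearMap S (Fin ν → R))
      (Algebra.linearMap R (Localization S)) (Localization S) L
  refine ⟨IsLocalization.mk' (Localization S) 1 s • L', LinearMap.restrictScalars_injective R <|
    IsLocalizedModule.linearMap_ext S (LocalizedModule.mkLinearMap S M)
      (Algebra.linearMap R (Localization S)) (LinearMap.ext fun m => ?_)⟩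
  have hL' : L' (LocalizedModule.map S (pushMap R M ε) (LocalizedModule.mkLinearMap S M m)) =
      (s : R) • φ (LocalizedModule.mkLinearMap S M m) := by
    rw [← hs, ← sum_smul_proj_comp_pushMap, LocalizedModule.mkLinearMap_apply,
      LocalizedModule.map_mk]
    exact IsLocalizedModule.map_apply S (LocalizedModule.mkLinearMap S (Fin ν → R))
      (Algebra.linearMap R (Localization S)) L _
  change IsLocalization.mk' (Localization S) 1 s • L' (LocalizedModule.map S (pushMap R M ε)
    (LocalizedModule.mkLinearMap S M m)) = φ (LocalizedModule.mkLinearMap S M m)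
  rw [hL', smul_eq_mul, Algebra.smul_def, ← mul_assoc, IsLocalization.mk'_spec, map_one, one_mul]

end Pushforward

theorem IsShortExact.min_le_rdepth_iff {A : Type u} [CommRing A] [IsLocalRing A]
    [IsNoetherianRing A] {N₁ : Type u} [AddCommGroup N₁] [Module A N₁] [Module.Finite A N₁]
    {N₂ : Type u} [AddCommGroup N₂] [Module A N₂] [Module.Finite A N₂] [Module.Projective A N₂]
    {N₃ : Type u} [AddCommGroup N₃] [Module A N₃] [Module.Finite A N₃] {f : N₁ →ₗ[A] N₂}
    {g : N₂ →ₗ[A] N₃} (h : IsShortExact f g)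
    (hext : ∀ φ : N₁ →ₗ[A] A, ∃ ψ : N₂ →ₗ[A] A, ψ ∘ₗ f = φ) {n d : ℕ∞}
    (hd : ringKrullDim A = d) (hS : min (n + 1) d ≤ rdepth A A)
    (hG : d ≤ n → IsGorensteinLocalRing A) :
    min (n + 1) d ≤ rdepth A N₁ ↔ min n d ≤ rdepth A N₃ := by
  have h₂ : min (n + 1) d ≤ rdepth A N₂ := hS.trans rdepth_self_le_of_flat
  refine ⟨fun h₁ => ?_, fun h₃ => h.le_rdepth_left h₂ ?_⟩
  · rcases lt_or_ge n d with hnd | hdn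
    · rw [min_eq_left (Order.add_one_le_of_lt hnd)] at h₁ h₂
      rw [min_eq_left hnd.le]
      exact h.le_rdepth_right (le_self_add.trans h₂) h₁
    · have hdepth (N : Type u) [AddCommGroup N] [Module A N] [Module.Finite A N] :
          d ≤ rdepth A N ↔ ∀ i > 0, ExtVanishes A N A i := by
        rw [← (hG hdn).ringKrullDim_le_rdepth_iff, hd]
        exact WithBot.coe_le_coe.symm
      rw [min_eq_right (hdn.trans le_self_add), hdepth] at h₁
      rw [min_eq_right hdn, hdepth]
      intro i hi
      obtain ⟨_ | i, rfl⟩ := Nat.exists_eq_succ_of_ne_zero hi.ne'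
      · exact h.extVanishes_one (extVanishes_succ_of_projective 0) hext
      · exact h.extVanishes_left₃ (fun j hj => h₁ j (by omega)) (extVanishes_succ_of_projective _)
  · calc min (n + 1) d ≤ min (n + 1) (d + 1) := min_le_min_left _ le_self_add
      _ = min n d + 1 := min_add_add_right n d 1
      _ ≤ rdepth A N₃ + 1 := by gcongr

theorem stmt8_general {R : Type u} [CommRing R] [IsNoetherianRing R] {n : ℕ}
    (hS : SerreCond R R (n + 1)) (hG : GorensteinCond R n)
    {M : Type u} [AddCommGroup M] [Module R M] [Module.Finite R M]
    (htf : Submodule.torsion R M = ⊥) {ν : ℕ} {ε : (Fin ν → R) →ₗ[R] Module.Dual R M}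
    (hε : Function.Surjective ε) :
    SerreCond R M (n + 1) ↔
      SerreCond R ((Fin ν → R) ⧸ LinearMap.range (pushMap R M ε)) n := by
  have hinj := pushMap_injective (hS.mono (by omega)) (hG.mono n.zero_le) htf hε
  rw [serreCond_iff, serreCond_iff]
  refine forall₂_congr fun p _ => ?_
  have hSp := serreCond_iff.1 hS p
  push_cast at hSp ⊢
  exact ((IsShortExact.of_injective hinj).localizedModule p.primeCompl).min_le_rdepth_iff
    (exists_comp_map_pushMap_eq hε p.primeCompl)
    (IsLocalization.AtPrime.ringKrullDim_eq_height p _) hSp (hG p)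

/-- `M` satisfies `(S_(n+1))` iff its pushforward `M₁` satisfies `(S_n)`. -/
theorem stmt8 (R : Type u) [CommRing R] (hG : IsGorensteinLocalRing R)
    (M : Type u) [AddCommGroup M] [Module R M] [Module.Finite R M]
    (htf : Submodule.torsion R M = ⊥) (ν : ℕ)
    (ε : (Fin ν → R) →ₗ[R] Module.Dual R M) (hsurj : Function.Surjective ε)
    (hmin : ∀ m : ℕ, m < ν →
      ¬ ∃ g : (Fin m → R) →ₗ[R] Module.Dual R M, Function.Surjective g) (n : ℕ) :
    SerreCond R M (n + 1) ↔
      SerreCond R ((Fin ν → R) ⧸ LinearMap.range (pushMap R M ε)) n := by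
  have := hG.1
  exact stmt8_general hG.serreCond_self hG.gorensteinCond htf hsurj

end
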